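/- Work over a commutative ring A with units q, t, w, r satisfying w² = q and (q − q^{−1})² r² = (t − t^{−1})(tq − t^{−1}q^{−1}). Define the 16×16 matrix Ř over A, rows and columns indexed by pairs (i,k) ∈ {1,2,3,4}², entry in row (i,k) and column (j,l) written e^{ik}_{jl}, whose only nonzero entries are: e^{11}_{11} = 1; e^{22}_{22} = e^{33}_{33} = −t²; e^{44}_{44} = t⁴q²; e^{21}_{21} = e^{31}_{31} = 1 − t²; e^{43}_{43} = e^{42}_{42} = t⁴q² − t²; e^{41}_{41} = (t² − 1)(t²q² − 1); e^{32}_{32} = t²q² − t²; e^{12}_{21} = e^{13}_{31} = e^{21}_{12} = e^{31}_{13} = t; e^{43}_{34} = e^{42}_{24} = e^{34}_{43} = e^{24}_{42} = t³q; e^{14}_{41} = e^{41}_{14} = t²; e^{23}_{32} = e^{32}_{23} = −t²q; e^{41}_{32} = e^{32}_{41} = (q − q^{−1})t²qrw; e^{41}_{23} = e^{23}_{41} = −(q − q^{−1})t²qrw^{−1}. Then, with I the 4×4 identity and ⊗ the Kronecker product, Ř satisfies the braid relation: (Ř ⊗ I) · (I ⊗ Ř) · (Ř ⊗ I) = (I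 ⊗ Ř) · (Ř ⊗ I) · (I ⊗ Ř). -/

import Mathlib

/-!
Both sides are compared through their action on functions `F : Fin 4 × Fin 4 × Fin 4 → A`.
Put `u = (q - q⁻¹) t q r w⁻¹`. Since `w ^ 2 = q`, every entry of `Ř` is a polynomial in `t`, `q`
and `u`: the entries containing `w` or `w⁻¹` become `t q u` or `-(t u)`, and the hypothesis
on `r` becomes `u ^ 2 = (t ^ 2 - 1) (t ^ 2 q ^ 2 - 1)`. Every row of `Ř` has at most four nonzero
entries, so `Ř` acts on functions by the short formulas of `RQ2Act`, and the braid relation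
reduces to one identity for each of the 64 rows, linear in the values of `F`
(`RQ2Act_braid`). Each of them holds modulo the single relation on `u ^ 2`.
-/

open Matrix
open scoped Kronecker

/-- `M ↦ M ⊗ I`, acting on triple tensor indices (reassociated). -/
def amp12 {A : Type*} [CommRing A] {n : ℕ}
    (M : Matrix (Fin n × Fin n) (Fin n × Fin n) A) :
    Matrix (Fin n × Fin n × Fin n) (Fin n × Fin n × Fin n) A :=
  Matrix.reindex (Equiv.prodAssoc (Fin n) (Fin n) (Fin n))
    (Equiv.prodAssoc (Fin n) (Fin n) (Fin n)) (M ⊗ₖ (1 : Matrix (Fin n) (Fin n) A))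

/-- `M ↦ I ⊗ M`, acting on triple tensor indices. -/
def amp23 {A : Type*} [CommRing A] {n : ℕ}
    (M : Matrix (Fin n × Fin n) (Fin n × Fin n) A) :
    Matrix (Fin n × Fin n × Fin n) (Fin n × Fin n × Fin n) A :=
  (1 : Matrix (Fin n) (Fin n) A) ⊗ₖ M

/-- The grading-stripped quantum R matrix `Ř²` of `U_q[gl(2|1)]`, with `t = q^α`,
`w = q^(1/2)`, `r = [α]^(1/2)[α+1]^(1/2)`; `qi` and `wi` stand for the inverses of
`q` and `w`; indices `1,2,3,4` are encoded as `0,1,2,3 : Fin 4`. -/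
def RQ2 {A : Type*} [CommRing A] (q qi t w wi r : A) :
    Matrix (Fin 4 × Fin 4) (Fin 4 × Fin 4) A :=
  Matrix.of fun x y =>
    if x = (0, 0) ∧ y = (0, 0) then 1
    else if x = (1, 1) ∧ y = (1, 1) then -t ^ 2
    else if x = (2, 2) ∧ y = (2, 2) then -t ^ 2
    else if x = (3, 3) ∧ y = (3, 3) then t ^ 4 * q ^ 2
    else if x = (1, 0) ∧ y = (1, 0) then 1 - t ^ 2
    else if x = (2, 0) ∧ y = (2, 0) then 1 - t ^ 2
    else if x = (3, 2) ∧ y = (3, 2) then t ^ 4 * q ^ 2 - t ^ 2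
    else if x = (3, 1) ∧ y = (3, 1) then t ^ 4 * q ^ 2 - t ^ 2
    else if x = (3, 0) ∧ y = (3, 0) then (t ^ 2 - 1) * (t ^ 2 * q ^ 2 - 1)
    else if x = (2, 1) ∧ y = (2, 1) then t ^ 2 * q ^ 2 - t ^ 2
    else if x = (0, 1) ∧ y = (1, 0) then t
    else if x = (0, 2) ∧ y = (2, 0) then t
    else if x = (1, 0) ∧ y = (0, 1) then t
    else if x = (2, 0) ∧ y = (0, 2) then t
    else if x = (3, 2) ∧ y = (2, 3) then t ^ 3 * q
    else if x = (3, 1) ∧ y = (1, 3) then t ^ 3 * q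
    else if x = (2, 3) ∧ y = (3, 2) then t ^ 3 * q
    else if x = (1, 3) ∧ y = (3, 1) then t ^ 3 * q
    else if x = (0, 3) ∧ y = (3, 0) then t ^ 2
    else if x = (3, 0) ∧ y = (0, 3) then t ^ 2
    else if x = (1, 2) ∧ y = (2, 1) then -(t ^ 2 * q)
    else if x = (2, 1) ∧ y = (1, 2) then -(t ^ 2 * q)
    else if x = (3, 0) ∧ y = (2, 1) then (q - qi) * t ^ 2 * q * r * w
    else if x = (2, 1) ∧ y = (3, 0) then (q - qi) * t ^ 2 * q * r * w
    else if x = (3, 0) ∧ y = (1, 2) then -((q - qi) * t ^ 2 * q * r * wi)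
    else if x = (1, 2) ∧ y = (3, 0) then -((q - qi) * t ^ 2 * q * r * wi)
    else 0

/-- The action of `Ř` on functions of two indices, one formula per row of the matrix, written
in terms of `t`, `q` and `u = (q - q⁻¹) t q r w⁻¹`. -/
def RQ2Act {A : Type*} [CommRing A] (q t u : A) (f : Fin 4 → Fin 4 → A) :
    Fin 4 → Fin 4 → A
  | 0, 0 => f 0 0
  | 0, 1 => t * f 1 0
  | 0, 2 => t * f 2 0
  | 0, 3 => t ^ 2 * f 3 0
  | 1, 0 => t * f 0 1 + (1 - t ^ 2) * f 1 0
  | 1, 1 => -t ^ 2 * f 1 1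
  | 1, 2 => -(t ^ 2 * q) * f 2 1 - t * u * f 3 0
  | 1, 3 => t ^ 3 * q * f 3 1
  | 2, 0 => t * f 0 2 + (1 - t ^ 2) * f 2 0
  | 2, 1 => -(t ^ 2 * q) * f 1 2 + (t ^ 2 * q ^ 2 - t ^ 2) * f 2 1 + t * q * u * f 3 0
  | 2, 2 => -t ^ 2 * f 2 2
  | 2, 3 => t ^ 3 * q * f 3 2
  | 3, 0 => t ^ 2 * f 0 3 - t * u * f 1 2 + t * q * u * f 2 1
      + (t ^ 2 - 1) * (t ^ 2 * q ^ 2 - 1) * f 3 0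
  | 3, 1 => t ^ 3 * q * f 1 3 + (t ^ 4 * q ^ 2 - t ^ 2) * f 3 1
  | 3, 2 => t ^ 3 * q * f 2 3 + (t ^ 4 * q ^ 2 - t ^ 2) * f 3 2
  | 3, 3 => t ^ 4 * q ^ 2 * f 3 3

set_option maxHeartbeats 4000000 in
/-- The braid relation for `RQ2Act`, acting on the first two and on the last two indices. -/
lemma RQ2Act_braid {A : Type*} [CommRing A] (q t u : A)
    (hu : u ^ 2 = (t ^ 2 - 1) * (t ^ 2 * q ^ 2 - 1)) (F : Fin 4 → Fin 4 → Fin 4 → A)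
    (i j k : Fin 4) :
    RQ2Act q t u (fun a b => RQ2Act q t u (fun c d =>
        RQ2Act q t u (fun e f => F e f d) a c) b k) i j =
      RQ2Act q t u (fun b c => RQ2Act q t u (fun a d =>
        RQ2Act q t u (fun e f => F a e f) d c) i b) j k := by
  fin_cases i <;> fin_cases j <;> fin_cases k <;>
    simp only [RQ2Act] <;> first | ring1 | grind

/-- `RQ2Act` is the action of `RQ2`, for any `u` that absorbs `w` and `wi` as in `h₁` and `h₂`. -/
lemma RQ2_mulVec {A : Type*} [CommRing A] (q qi t w wi r u : A)
    (h₁ : (q - qi) * t ^ 2 * q * r * w = t * q * u)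
    (h₂ : (q - qi) * t ^ 2 * q * r * wi = t * u) (f : Fin 4 × Fin 4 → A) (i j : Fin 4) :
    (RQ2 q qi t w wi r *ᵥ f) (i, j) = RQ2Act q t u (fun a b => f (a, b)) i j := by
  fin_cases i <;> fin_cases j <;>
    simp [RQ2Act, RQ2, mulVec, dotProduct, Fintype.sum_prod_type, Fin.sum_univ_four, h₁, h₂] <;>
    ring

lemma amp12_mulVec {A : Type*} [CommRing A] {n : ℕ}
    (M : Matrix (Fin n × Fin n) (Fin n × Fin n) A) (F : Fin n × Fin n × Fin n → A)
    (i j k : Fin n) :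
    (amp12 M *ᵥ F) (i, j, k) = (M *ᵥ fun x => F (x.1, x.2, k)) (i, j) := by
  simp [amp12, mulVec, dotProduct, Fintype.sum_prod_type, Matrix.one_apply]

lemma amp23_mulVec {A : Type*} [CommRing A] {n : ℕ}
    (M : Matrix (Fin n × Fin n) (Fin n × Fin n) A) (F : Fin n × Fin n × Fin n → A)
    (i j k : Fin n) :
    (amp23 M *ᵥ F) (i, j, k) = (M *ᵥ fun x => F (i, x)) (j, k) := by
  simp [amp23, mulVec, dotProduct, Fintype.sum_prod_type, Matrix.one_apply]

/-- `Ř²` satisfies the braid relation `(Ř⊗I)(I⊗Ř)(Ř⊗I) = (I⊗Ř)(Ř⊗I)(I⊗Ř)`. -/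
theorem RQ2_braid {A : Type*} [CommRing A] (q t w r : Aˣ)
    (hw2 : (w : A) ^ 2 = q)
    (hr2 : ((q : A) - (q⁻¹ : Aˣ)) ^ 2 * (r : A) ^ 2 =
      ((t : A) - (t⁻¹ : Aˣ)) * ((t : A) * q - ((t⁻¹ : Aˣ) : A) * ((q⁻¹ : Aˣ) : A))) :
    amp12 (RQ2 (q : A) ((q⁻¹ : Aˣ) : A) (t : A) (w : A) ((w⁻¹ : Aˣ) : A) (r : A)) *
        amp23 (RQ2 (q : A) ((q⁻¹ : Aˣ) : A) (t : A) (w : A) ((w⁻¹ : Aˣ) : A) (r : A)) *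
        amp12 (RQ2 (q : A) ((q⁻¹ : Aˣ) : A) (t : A) (w : A) ((w⁻¹ : Aˣ) : A) (r : A)) =
      amp23 (RQ2 (q : A) ((q⁻¹ : Aˣ) : A) (t : A) (w : A) ((w⁻¹ : Aˣ) : A) (r : A)) *
        amp12 (RQ2 (q : A) ((q⁻¹ : Aˣ) : A) (t : A) (w : A) ((w⁻¹ : Aˣ) : A) (r : A)) *
        amp23 (RQ2 (q : A) ((q⁻¹ : Aˣ) : A) (t : A) (w : A) ((w⁻¹ : Aˣ) : A) (r : A)) := by
  have hq : (q : A) * ((q⁻¹ : Aˣ) : A) = 1 := q.mul_inv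
  have ht : (t : A) * ((t⁻¹ : Aˣ) : A) = 1 := t.mul_inv
  have hw : (w : A) * ((w⁻¹ : Aˣ) : A) = 1 := w.mul_inv
  generalize ((q⁻¹ : Aˣ) : A) = qi at *
  generalize ((t⁻¹ : Aˣ) : A) = ti at *
  generalize ((w⁻¹ : Aˣ) : A) = wi at *
  generalize (q : A) = q at *
  generalize (t : A) = t at *
  generalize (w : A) = w at *
  generalize (r : A) = r at *
  obtain ⟨u, hu⟩ : ∃ u, u = (q - qi) * t * q * r * wi := ⟨_, rfl⟩
  have hqw : q * wi = w := by linear_combination -wi * hw2 + w * hw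
  have hqw2 : q * wi ^ 2 = 1 := by linear_combination wi * hqw + hw
  have hu2 : u ^ 2 = (t ^ 2 - 1) * (t ^ 2 * q ^ 2 - 1) := by
    have h : t ^ 2 * q * ((q - qi) ^ 2 * r ^ 2) = (t ^ 2 - 1) * (t ^ 2 * q ^ 2 - 1) := by
      rw [hr2]
      grind
    rw [hu, ← h]
    linear_combination (q - qi) ^ 2 * t ^ 2 * q * r ^ 2 * hqw2
  have h₁ : (q - qi) * t ^ 2 * q * r * w = t * q * u := by
    rw [hu]
    linear_combination -(q - qi) * t ^ 2 * q * r * hqw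
  have h₂ : (q - qi) * t ^ 2 * q * r * wi = t * u := by
    rw [hu]
    ring
  refine Matrix.mulVec_injective (funext fun F => funext fun ⟨i, j, k⟩ => ?_)
  simp only [← Matrix.mulVec_mulVec, amp12_mulVec, amp23_mulVec,
    RQ2_mulVec q qi t w wi r u h₁ h₂]
  exact RQ2Act_braid q t u hu2 (fun a b c => F (a, b, c)) i j k
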